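/- Define Ω_{0,5}(X,Y)(f) = (X^(5)Y″ + X^(4)Y‴)f + 4X^(4)Y″f′ + 3X‴Y″f″ − (the same expression with X and Y exchanged). Then Ω_{0,5} = −[[C_{2,5}, C_{0,2}]] (with C_{2,5}(X)(f) = X‴f′ + X″f″ valued in D_{2,5} and C_{0,2}(X)(f) = X‴f + 2X″f′ valued in D_{0,2}); Ω_{0,5} is a 2-cocycle on Vect(1) with values in D_{0,5}; and there exist no α₀,…,α₆ ∈ ℝ such that Ω_{0,5} = ∂b, where b(X)(f) = Σ_{j=0}^{6} α_j X^(6−j) f^(j). -/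

import Mathlib

noncomputable section

/-- Polynomials over ℝ, identified with polynomial vector fields / densities on the line. -/
abbrev P : Type := Polynomial ℝ

/-- Derivative d/dx. -/
def D : P → P := fun f => Polynomial.derivative f

/-- Iterated derivative: `Dk k f = f^(k)`. -/
def Dk (k : ℕ) : P → P := D^[k]

/-- Lie bracket on Vect(1): [X,Y] = XY' - X'Y. -/
def br (X Y : P) : P := X * D Y - D X * Y

/-- Action of the vector field X on λ-densities: `L_X^λ f = X f' + λ X' f`. -/
def Lw (l : ℝ) (X f : P) : P := X * D f + Polynomial.C l * D X * f

/-- Action on operators from F_ν to F_μ: `L_X^{ν,μ}(A) = L_X^μ ∘ A - A ∘ L_X^ν`. -/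
def LD (nu mu : ℝ) (X : P) (A : P → P) (f : P) : P := Lw mu X (A f) - A (Lw nu X f)

/-- 1-cocycle condition with values in D_{ν,μ}. -/
def IsCocycle1 (nu mu : ℝ) (c : P → P → P) : Prop :=
  ∀ X Y f, c (br X Y) f = LD nu mu X (c Y) f - LD nu mu Y (c X) f

/-- 2-cocycle condition with values in D_{ν,μ}. -/
def IsCocycle2 (nu mu : ℝ) (o : P → P → P → P) : Prop :=
  ∀ X Y Z f,
    LD nu mu X (o Y Z) f - LD nu mu Y (o X Z) f + LD nu mu Z (o X Y) f
      - o (br X Y) Z f + o (br X Z) Y f - o (br Y Z) X f = 0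

/-- Cup product of 1-cochains: `[[C₁,C₂]](X,Y) = C₁(X)∘C₂(Y) - C₁(Y)∘C₂(X)`. -/
def cup (c₁ c₂ : P → P → P) (X Y f : P) : P := c₁ X (c₂ Y f) - c₁ Y (c₂ X f)

/-- Coboundary of a 1-cochain b with values in D_{ν,μ}. -/
def cob (nu mu : ℝ) (b : P → P → P) (X Y f : P) : P :=
  LD nu mu X (b Y) f - LD nu mu Y (b X) f - b (br X Y) f


/-- Half of the 2-cocycle `Ω_{0,5}`. -/
def term12 (X Y f : P) : P :=
  (Dk 5 X * Dk 2 Y + Dk 4 X * Dk 3 Y) * f + 4 * Dk 4 X * Dk 2 Y * D f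
    + 3 * Dk 3 X * Dk 2 Y * Dk 2 f

/-- The 2-cocycle `Ω_{0,5}`. -/
def Om05 (X Y f : P) : P := term12 X Y f - term12 Y X f


theorem Dk_0 (f : P) : Dk 0 f = f := rfl
theorem Dk_1 (f : P) : Dk 1 f = D f := rfl
theorem Dk_2 (f : P) : Dk 2 f = D (D f) := rfl
theorem Dk_3 (f : P) : Dk 3 f = D (D (D f)) := rfl
theorem Dk_4 (f : P) : Dk 4 f = D (D (D (D f))) := rfl
theorem Dk_5 (f : P) : Dk 5 f = D (D (D (D (D f)))) := rfl
theorem Dk_6 (f : P) : Dk 6 f = D (D (D (D (D (D f))))) := rfl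
theorem D_add (f g : P) : D (f + g) = D f + D g := Polynomial.derivative_add
theorem D_sub (f g : P) : D (f - g) = D f - D g := Polynomial.derivative_sub
theorem D_mul (f g : P) : D (f * g) = D f * g + f * D g := Polynomial.derivative_mul
theorem D_C (c : ℝ) : D (Polynomial.C c) = 0 := Polynomial.derivative_C
theorem D_two : D (2 : P) = 0 := Polynomial.derivative_ofNat 2
theorem D_three : D (3 : P) = 0 := Polynomial.derivative_ofNat 3
theorem D_four : D (4 : P) = 0 := Polynomial.derivative_ofNat 4
theorem D_zero : D (0 : P) = 0 := Polynomial.derivative_zero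
theorem C_five : (Polynomial.C (5 : ℝ) : P) = 5 := rfl

theorem Om05_cup (X Y f : P) : Om05 X Y f =
      - cup (fun X f => Dk 3 X * D f + Dk 2 X * Dk 2 f)
          (fun X f => Dk 3 X * f + 2 * Dk 2 X * D f) X Y f := by
  simp only [Om05, term12, cup, Dk_2, Dk_3, Dk_4, Dk_5, D_add, D_mul, D_two, D_zero]
  ring

set_option maxHeartbeats 4000000 in
theorem Om05_cocycle : IsCocycle2 0 5 Om05 := by
  intro X Y Z f
  simp only [LD, Lw, br, Om05, term12, Dk_2, Dk_3, Dk_4, Dk_5, D_add, D_sub, D_mul,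
    D_three, D_four, Polynomial.C_0, C_five, zero_mul, add_zero, zero_add]
  ring

theorem Dk_succ_const (k : ℕ) (c : ℝ) :
    Dk (k + 1) (Polynomial.C c * Polynomial.X ^ 0) = 0 := by
  induction k with
  | zero => simp [Dk, D]
  | succ k ih =>
    have e : Dk (k + 1 + 1) (Polynomial.C c * Polynomial.X ^ 0) =
      D (Dk (k + 1) (Polynomial.C c * Polynomial.X ^ 0)) :=
        Function.iterate_succ_apply' _ _ _
    rw [e, ih, D_zero]

theorem cochain_one (a : Fin 7 → ℝ) (Z : P) (c : ℝ) : (∑ j : Fin 7,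
        Polynomial.C (a j) * Dk (6 - (j : ℕ)) Z * Dk (j : ℕ) (Polynomial.C c)) =
      Polynomial.C (a 0) * Dk 6 Z * Polynomial.C c := by
  rw [Fin.sum_univ_succ, Finset.sum_eq_zero, add_zero]
  · rfl
  · intro j _
    have := Dk_succ_const j c
    rw [pow_zero, mul_one] at this
    rw [Fin.val_succ, this, mul_zero]

theorem cob_one (a : Fin 7 → ℝ) (X Y : P) :
    cob 0 5 (fun X f => ∑ j : Fin 7,
        Polynomial.C (a j) * Dk (6 - (j : ℕ)) X * Dk (j : ℕ) f) X Y (Polynomial.C 1) =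
      Lw 5 X (Polynomial.C (a 0) * Dk 6 Y) - Lw 5 Y (Polynomial.C (a 0) * Dk 6 X)
        - Polynomial.C (a 0) * Dk 6 (br X Y) := by
  have hL : ∀ Z : P, Lw 0 Z (Polynomial.C 1) = Polynomial.C 0 := by
    intro Z; simp [Lw, D]
  simp only [cob, LD, hL, cochain_one]
  simp

theorem Dk_six_low (n : ℕ) (hn : n < 6) : Dk 6 (Polynomial.X ^ n : P) = 0 :=
  Polynomial.iterate_derivative_eq_zero (by simpa using hn)

theorem Om05_one (X Y : P) : Om05 X Y (Polynomial.C 1) =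
    (Dk 5 X * Dk 2 Y + Dk 4 X * Dk 3 Y) - (Dk 5 Y * Dk 2 X + Dk 4 Y * Dk 3 X) := by
  simp only [Om05, term12, Dk_2 (Polynomial.C 1), D_C, D_zero]
  rw [Polynomial.C_1]
  ring

theorem Dk_pow (k n : ℕ) : Dk k (Polynomial.X ^ n : P) =
    (n.descFactorial k : P) * Polynomial.X ^ (n - k) := by
  have := Polynomial.iterate_derivative_X_pow_eq_natCast_mul (R := ℝ) n k
  exact this

theorem Om05_nontrivial : ¬ ∃ a : Fin 7 → ℝ, ∀ X Y f : P, Om05 X Y f =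
      cob 0 5 (fun X f => ∑ j : Fin 7,
        Polynomial.C (a j) * Dk (6 - (j : ℕ)) X * Dk (j : ℕ) f) X Y f := by
  rintro ⟨a, h⟩
  have b1 : br (Polynomial.X ^ 4) (Polynomial.X ^ 3) = - Polynomial.X ^ 6 := by
    simp only [br, D, Polynomial.derivative_X_pow, map_natCast]; push_cast; ring
  have b2 : br (Polynomial.X ^ 5) (Polynomial.X ^ 2) = - (3 * Polynomial.X ^ 6) := by
    simp only [br, D, Polynomial.derivative_X_pow, map_natCast]; push_cast; ring
  have n1 : Dk 6 (- Polynomial.X ^ 6 : P) = - 720 := by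
    have : Dk 6 (- Polynomial.X ^ 6 : P) = - Dk 6 (Polynomial.X ^ 6 : P) :=
      Polynomial.iterate_derivative_neg
    rw [this, Dk_pow]; norm_num [Nat.descFactorial]
  have n2 : Dk 6 (- (3 * Polynomial.X ^ 6) : P) = - 2160 := by
    have e : (- (3 * Polynomial.X ^ 6) : P)
      = - Polynomial.X ^ 6 + (- Polynomial.X ^ 6 + - Polynomial.X ^ 6) := by ring
    have ad : ∀ f g : P, Dk 6 (f + g) = Dk 6 f + Dk 6 g :=
      fun f g => iterate_map_add Polynomial.derivative 6 f g
    rw [e, ad, ad, n1]; norm_num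
  have h1 := h (Polynomial.X ^ 4) (Polynomial.X ^ 3) (Polynomial.C 1)
  have h2 := h (Polynomial.X ^ 5) (Polynomial.X ^ 2) (Polynomial.C 1)
  rw [cob_one, Om05_one, b1, n1, Dk_six_low 4 (by norm_num), Dk_six_low 3 (by norm_num)] at h1
  rw [cob_one, Om05_one, b2, n2, Dk_six_low 5 (by norm_num), Dk_six_low 2 (by norm_num)] at h2
  simp only [Dk_pow, Lw, mul_zero, D_zero] at h1 h2
  have e1 := congrArg (Polynomial.eval 0) h1
  have e2 := congrArg (Polynomial.eval 0) h2
  norm_num [Nat.descFactorial] at e1 e2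
  linarith

/-- `Ω_{0,5} = -[[C_{2,5},C_{0,2}]]` is a nontrivial 2-cocycle with values
in `D_{0,5}`. -/
theorem Om05_nontrivial_two_cocycle :
    (∀ X Y f : P, Om05 X Y f =
      - cup (fun X f => Dk 3 X * D f + Dk 2 X * Dk 2 f)
          (fun X f => Dk 3 X * f + 2 * Dk 2 X * D f) X Y f) ∧
    IsCocycle2 0 5 Om05 ∧
    ¬ ∃ a : Fin 7 → ℝ, ∀ X Y f : P, Om05 X Y f =
      cob 0 5 (fun X f => ∑ j : Fin 7,
        Polynomial.C (a j) * Dk (6 - (j : ℕ)) X * Dk (j : ℕ) f) X Y f := by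
  exact ⟨Om05_cup, Om05_cocycle, Om05_nontrivial⟩
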